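/- arXiv:2007.07941 — 2 statements merged into one kernel-verified Lean document; each statement's English description precedes it below -/
import Mathlib

section
/- The map τ is a Lie algebra homomorphism from (End^{-1}(V), [·,·]) to the degree-0 graded endomorphisms with commutator bracket: for all T,S ∈ End^{-1}(V), τ([T,S]) = τ(T)∘τ(S) − τ(S)∘τ(T), exactly (as an identity of degree-0 graded endomorphisms). -/
/-!
Since `∂∘∂ = 0`, every `τ(S)` commutes with `∂` (`tau_v_comp_d`). Hence
`τ(T∘τ(S)) = ∂∘T∘τ(S) + T∘τ(S)∘∂ = τ(T)∘τ(S)` (`tau_tau_comp`), and the claim follows by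
additivity of `τ`.
-/

/-!
Statement 3: The map `τ` is a Lie algebra homomorphism from `(End⁻¹(V), [·,·])`
to the degree-`0` graded endomorphisms with the commutator bracket: for all
`T, S ∈ End⁻¹(V)`, `τ([T,S]) = τ(T)∘τ(S) − τ(S)∘τ(T)`, exactly.

Degree-`r` graded endomorphisms of `V` are formalized as `Cochain V V r`, and
`z₁.comp z₂ _` is the composition "`z₁` first, then `z₂`", i.e. `z₂ ∘ z₁` in
function-order notation.
-/

open CategoryTheory CochainComplex HomComplex

universe v u

variable {R : Type u} [CommRing R]

/-- The differential `∂` of a cochain complex `V`, as a graded endomorphism of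
degree `1`. -/
noncomputable def Dc (V : CochainComplex (ModuleCat.{v} R) ℤ) : Cochain V V 1 :=
  Cochain.mk fun p q _ => V.d p q

/-- `τ(S) := ∂∘S + S∘∂`, a graded endomorphism of degree `0`. -/
noncomputable def tau (V : CochainComplex (ModuleCat.{v} R) ℤ) (S : Cochain V V (-1)) :
    Cochain V V 0 :=
  S.comp (Dc V) (by omega) + (Dc V).comp S (by omega)

/-- The bracket `[T,S] := T∘τ(S) − S∘τ(T)` on `End⁻¹(V)`. -/
noncomputable def bracket (V : CochainComplex (ModuleCat.{v} R) ℤ)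
    (T S : Cochain V V (-1)) : Cochain V V (-1) :=
  (tau V S).comp T (by omega) - (tau V T).comp S (by omega)

lemma tau_v (V : CochainComplex (ModuleCat.{v} R) ℤ) (S : Cochain V V (-1)) (p q r : ℤ)
    (hq : q + 1 = p) (hr : p + 1 = r) :
    (tau V S).v p p (add_zero p) =
      S.v p q (by omega) ≫ V.d q p + V.d p r ≫ S.v r p (by omega) := by
  rw [tau, Cochain.add_v, Cochain.comp_v S (Dc V) _ p q p (by omega) hq,
    Cochain.comp_v (Dc V) S _ p r p hr (by omega)]
  rfl

/-- `τ(S)` is a chain map: both `∂∘τ(S)` and `τ(S)∘∂` equal `∂∘S∘∂`, since `∂∘∂ = 0`. -/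
lemma tau_v_comp_d (V : CochainComplex (ModuleCat.{v} R) ℤ) (S : Cochain V V (-1)) (p q : ℤ)
    (hpq : p + 1 = q) :
    (tau V S).v p p (add_zero p) ≫ V.d p q = V.d p q ≫ (tau V S).v q q (add_zero q) := by
  rw [tau_v V S p (p - 1) q (by omega) hpq, tau_v V S q p (q + 1) hpq rfl]
  simp

/-- Because `τ(S)` commutes with `∂`, it can be pulled out of `τ(T∘τ(S))` on the right. -/
lemma tau_tau_comp (V : CochainComplex (ModuleCat.{v} R) ℤ) (T S : Cochain V V (-1)) :
    tau V ((tau V S).comp T (zero_add (-1))) = (tau V S).comp (tau V T) (zero_add 0) := by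
  refine Cochain.ext₀ _ _ fun p => ?_
  have hcomm := tau_v_comp_d V S p (p + 1) rfl
  rw [Cochain.zero_cochain_comp_v, tau_v V _ p (p - 1) (p + 1) (by omega) rfl,
    tau_v V T p (p - 1) (p + 1) (by omega) rfl, Cochain.zero_cochain_comp_v,
    Cochain.zero_cochain_comp_v, Preadditive.comp_add, Category.assoc, reassoc_of% hcomm]

lemma tau_sub (V : CochainComplex (ModuleCat.{v} R) ℤ) (A B : Cochain V V (-1)) :
    tau V (A - B) = tau V A - tau V B := by
  simp only [tau, Cochain.sub_comp, Cochain.comp_sub]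
  abel

theorem stmt3 (V : CochainComplex (ModuleCat.{v} R) ℤ) (T S : Cochain V V (-1)) :
    -- `τ([T,S]) = τ(T)∘τ(S) − τ(S)∘τ(T)`
    tau V (bracket V T S) =
      (tau V S).comp (tau V T) (show (0 : ℤ) + 0 = 0 by omega) -
        (tau V T).comp (tau V S) (show (0 : ℤ) + 0 = 0 by omega) := by
  rw [bracket, tau_sub, tau_tau_comp, tau_tau_comp]
end

section
/- Let (V,∂_V) and (W,∂_W) be cochain complexes of R-modules, ρ, ρ' : V → W degree-0 chain maps, and ξ : V → W a degree −1 graded map with ∂_W∘ξ + ξ∘∂_V = ρ − ρ'. Let h : V → V be a degree −1 graded endomorphism and g : V → V a degree-0 chain map, and set τ(h) := id_V + ∂_V∘h + h∘∂_V and η := ξ∘τ(h)∘g − ρ∘h∘g. Then ∂_W∘η + η∘∂_V = ρ∘g − ρ'∘τ(h)∘g; that is, η is a chain homotopy exhibiting R(ξ,(h,g)) := ξ∘τ(h)∘g − ρ∘h∘g as a morphism from ρ∘g to ρ'∘τ(h)∘g. -/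
/-!
Since `∂∘∂ = 0`, `τ(h)` commutes with `∂` (`Dc_comp_tauGrp`), hence so does `τ(h)∘g`. Therefore
`∂∘η + η∘∂ = (∂∘ξ + ξ∘∂)∘τ(h)∘g - ρ∘(∂∘h + h∘∂)∘g = (ρ - ρ')∘τ(h)∘g - ρ∘(τ(h) - id)∘g`,
and the two terms `ρ∘τ(h)∘g` cancel.
-/

/-!
Statement 10: Let `(V,∂_V)` and `(W,∂_W)` be cochain complexes of `R`-modules,
`ρ, ρ' : V → W` degree-`0` chain maps, and `ξ : V → W` a degree `−1` graded map
with `∂_W∘ξ + ξ∘∂_V = ρ − ρ'`.  Let `h : V → V` be a degree `−1` graded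
endomorphism and `g : V → V` a degree-`0` chain map, and set
`τ(h) := id_V + ∂_V∘h + h∘∂_V` and `η := ξ∘τ(h)∘g − ρ∘h∘g`.  Then
`∂_W∘η + η∘∂_V = ρ∘g − ρ'∘τ(h)∘g`; that is, `η` is a chain homotopy exhibiting
`R(ξ,(h,g)) := ξ∘τ(h)∘g − ρ∘h∘g` as a morphism from `ρ∘g` to `ρ'∘τ(h)∘g`.

Degree-`r` graded maps `V → W` are formalized as `Cochain V W r`, and
`z₁.comp z₂ _` is the composition "`z₁` first, then `z₂`", i.e. `z₂ ∘ z₁` in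
function-order notation.
-/

open CategoryTheory CochainComplex HomComplex

universe v u

variable {R : Type u} [CommRing R]

/-- `τ(h) := id_V + ∂_V∘h + h∘∂_V`, for `h` a degree `−1` graded endomorphism. -/
noncomputable def tauGrp (V : CochainComplex (ModuleCat.{v} R) ℤ)
    (h : Cochain V V (-1)) : Cochain V V 0 :=
  Cochain.ofHom (𝟙 V) + h.comp (Dc V) (by omega) + (Dc V).comp h (by omega)

/-- The differential squares to zero, as an identity of degree `2` cochains. -/
lemma Dc_comp_Dc (V : CochainComplex (ModuleCat.{v} R) ℤ) (h₂ : (1 : ℤ) + 1 = 2) :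
    (Dc V).comp (Dc V) h₂ = 0 := by
  ext p q hpq
  rw [Cochain.comp_v _ _ _ p (p + 1) q rfl (by omega)]
  simp [Dc]

/-- `τ(h)` is a chain map: both composites with `∂` equal `∂ + ∂∘h∘∂`, since `∂∘∂ = 0`. -/
lemma Dc_comp_tauGrp (V : CochainComplex (ModuleCat.{v} R) ℤ) (h : Cochain V V (-1))
    (h₁₀ : (1 : ℤ) + 0 = 1) (h₀₁ : (0 : ℤ) + 1 = 1) :
    (Dc V).comp (tauGrp V h) h₁₀ = (tauGrp V h).comp (Dc V) h₀₁ := by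
  have e₁ : (Dc V).comp ((Dc V).comp h (show (1 : ℤ) + -1 = 0 by omega))
      (show (1 : ℤ) + 0 = 1 by omega) = 0 := by
    rw [← Cochain.comp_assoc (Dc V) (Dc V) h (show (1 : ℤ) + 1 = 2 by omega) (by omega)
      (by omega), Dc_comp_Dc, Cochain.zero_comp]
  have e₂ : (h.comp (Dc V) (show (-1 : ℤ) + 1 = 0 by omega)).comp (Dc V)
      (show (0 : ℤ) + 1 = 1 by omega) = 0 := by
    rw [Cochain.comp_assoc h (Dc V) (Dc V) _ (show (1 : ℤ) + 1 = 2 by omega) (by omega),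
      Dc_comp_Dc, Cochain.comp_zero]
  have e₃ : (Dc V).comp (h.comp (Dc V) (show (-1 : ℤ) + 1 = 0 by omega))
      (show (1 : ℤ) + 0 = 1 by omega) =
      ((Dc V).comp h (show (1 : ℤ) + -1 = 0 by omega)).comp (Dc V)
        (show (0 : ℤ) + 1 = 1 by omega) :=
    (Cochain.comp_assoc (Dc V) h (Dc V) _ _ (by omega)).symm
  simp only [tauGrp, Cochain.comp_add, Cochain.add_comp, e₁, e₂, e₃, Cochain.comp_id,
    Cochain.id_comp, add_zero]

theorem stmt10 (V W : CochainComplex (ModuleCat.{v} R) ℤ)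
    (ρ ρ' : Cochain V W 0)
    -- `ρ` and `ρ'` are chain maps
    (hρ : (Dc V).comp ρ (show (1 : ℤ) + 0 = 1 by omega) =
      ρ.comp (Dc W) (show (0 : ℤ) + 1 = 1 by omega))
    (hρ' : (Dc V).comp ρ' (show (1 : ℤ) + 0 = 1 by omega) =
      ρ'.comp (Dc W) (show (0 : ℤ) + 1 = 1 by omega))
    -- `ξ` is a homotopy: `∂_W∘ξ + ξ∘∂_V = ρ − ρ'`
    (ξ : Cochain V W (-1))
    (hξ : ξ.comp (Dc W) (show (-1 : ℤ) + 1 = 0 by omega) +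
      (Dc V).comp ξ (show (1 : ℤ) + -1 = 0 by omega) = ρ - ρ')
    (h : Cochain V V (-1)) (g : Cochain V V 0)
    -- `g` is a chain map
    (hg : (Dc V).comp g (show (1 : ℤ) + 0 = 1 by omega) =
      g.comp (Dc V) (show (0 : ℤ) + 1 = 1 by omega))
    -- `η := ξ∘τ(h)∘g − ρ∘h∘g`
    (η : Cochain V W (-1))
    (hη : η = (g.comp (tauGrp V h) (show (0 : ℤ) + 0 = 0 by omega)).comp ξ
        (show (0 : ℤ) + -1 = -1 by omega) -
      (g.comp h (show (0 : ℤ) + -1 = -1 by omega)).comp ρ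
        (show (-1 : ℤ) + 0 = -1 by omega)) :
    -- `∂_W∘η + η∘∂_V = ρ∘g − ρ'∘τ(h)∘g`
    η.comp (Dc W) (show (-1 : ℤ) + 1 = 0 by omega) +
        (Dc V).comp η (show (1 : ℤ) + -1 = 0 by omega) =
      g.comp ρ (show (0 : ℤ) + 0 = 0 by omega) -
        (g.comp (tauGrp V h) (show (0 : ℤ) + 0 = 0 by omega)).comp ρ'
          (show (0 : ℤ) + 0 = 0 by omega) := by
  subst hη
  -- `τ(h)∘g` commutes with the differentials.
  have hG : (Dc V).comp (g.comp (tauGrp V h) (show (0 : ℤ) + 0 = 0 by omega))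
      (show (1 : ℤ) + 0 = 1 by omega) =
      (g.comp (tauGrp V h) (show (0 : ℤ) + 0 = 0 by omega)).comp (Dc V)
        (show (0 : ℤ) + 1 = 1 by omega) := by
    rw [← Cochain.comp_assoc (Dc V) g (tauGrp V h) (show (1 : ℤ) + 0 = 1 by omega) _ (by omega),
      hg, Cochain.comp_assoc g (Dc V) (tauGrp V h) _ (show (1 : ℤ) + 0 = 1 by omega) (by omega),
      Dc_comp_tauGrp,
      Cochain.comp_assoc g (tauGrp V h) (Dc V) _ (show (0 : ℤ) + 1 = 1 by omega) (by omega)]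
  have hτ : (g.comp (tauGrp V h) (show (0 : ℤ) + 0 = 0 by omega)).comp ρ
      (show (0 : ℤ) + 0 = 0 by omega) =
      g.comp ρ (show (0 : ℤ) + 0 = 0 by omega) +
      ((g.comp (h.comp (Dc V) (show (-1 : ℤ) + 1 = 0 by omega))
        (show (0 : ℤ) + 0 = 0 by omega)).comp ρ (show (0 : ℤ) + 0 = 0 by omega) +
      (g.comp ((Dc V).comp h (show (1 : ℤ) + -1 = 0 by omega))
        (show (0 : ℤ) + 0 = 0 by omega)).comp ρ (show (0 : ℤ) + 0 = 0 by omega)) := by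
    simp only [tauGrp, Cochain.comp_add, Cochain.add_comp, Cochain.comp_id, add_assoc]
  generalize g.comp (tauGrp V h) (show (0 : ℤ) + 0 = 0 by omega) = G at hG hτ ⊢
  have e₁ : (G.comp ξ (show (0 : ℤ) + -1 = -1 by omega)).comp (Dc W)
      (show (-1 : ℤ) + 1 = 0 by omega) +
      (Dc V).comp (G.comp ξ (show (0 : ℤ) + -1 = -1 by omega))
        (show (1 : ℤ) + -1 = 0 by omega) =
      G.comp ρ (show (0 : ℤ) + 0 = 0 by omega) - G.comp ρ' (show (0 : ℤ) + 0 = 0 by omega) := by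
    rw [← Cochain.comp_sub, ← hξ, Cochain.comp_add,
      Cochain.comp_assoc G ξ (Dc W) _ (show (-1 : ℤ) + 1 = 0 by omega) (by omega),
      ← Cochain.comp_assoc (Dc V) G ξ (show (1 : ℤ) + 0 = 1 by omega) _ (by omega), hG,
      Cochain.comp_assoc G (Dc V) ξ _ (show (1 : ℤ) + -1 = 0 by omega) (by omega)]
  have e₂ : ((g.comp h (show (0 : ℤ) + -1 = -1 by omega)).comp ρ
      (show (-1 : ℤ) + 0 = -1 by omega)).comp (Dc W) (show (-1 : ℤ) + 1 = 0 by omega) =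
      (g.comp (h.comp (Dc V) (show (-1 : ℤ) + 1 = 0 by omega))
        (show (0 : ℤ) + 0 = 0 by omega)).comp ρ (show (0 : ℤ) + 0 = 0 by omega) := by
    rw [Cochain.comp_assoc _ ρ (Dc W) _ (show (0 : ℤ) + 1 = 1 by omega) (by omega), ← hρ,
      ← Cochain.comp_assoc _ (Dc V) ρ (show (-1 : ℤ) + 1 = 0 by omega) _ (by omega),
      Cochain.comp_assoc g h (Dc V) _ (show (-1 : ℤ) + 1 = 0 by omega) (by omega)]
  have e₃ : (Dc V).comp ((g.comp h (show (0 : ℤ) + -1 = -1 by omega)).comp ρ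
      (show (-1 : ℤ) + 0 = -1 by omega)) (show (1 : ℤ) + -1 = 0 by omega) =
      (g.comp ((Dc V).comp h (show (1 : ℤ) + -1 = 0 by omega))
        (show (0 : ℤ) + 0 = 0 by omega)).comp ρ (show (0 : ℤ) + 0 = 0 by omega) := by
    rw [← Cochain.comp_assoc (Dc V) _ ρ (show (1 : ℤ) + -1 = 0 by omega) _ (by omega),
      ← Cochain.comp_assoc (Dc V) g h (show (1 : ℤ) + 0 = 1 by omega) _ (by omega), hg,
      Cochain.comp_assoc g (Dc V) h _ (show (1 : ℤ) + -1 = 0 by omega) (by omega)]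
  rw [Cochain.sub_comp, Cochain.comp_sub, e₂, e₃, sub_add_sub_comm, e₁, hτ]
  abel
end
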